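/- Set ExRet(ε) := ∅. For each level-2 stack s, ExRet(s) is determined by ExRet(Pop₁(s)), Sym(s) and Lvl(s): if w,w' are topmost words of level-2 stacks with Sym(w)=Sym(w'), Lvl(w)=Lvl(w') and ExRet(Pop₁(w))=ExRet(Pop₁(w')), then ExRet(w)=ExRet(w'). -/

import Mathlib

namespace CPG

/-! ## Level-2 collapsible pushdown stacks -/

/-- Stack letters: `Sum.inl σ` is a letter with a level-1 link,
`Sum.inr (σ, k)` is a letter with a level-2 link to the substack of width `k`. -/
abbrev Letter (A : Type) := A ⊕ (A × ℕ)

def symOf {A : Type} : Letter A → A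
  | Sum.inl a => a
  | Sum.inr (a, _) => a

def lvlOf {A : Type} : Letter A → ℕ
  | Sum.inl _ => 1
  | Sum.inr _ => 2

abbrev Word (A : Type) := List (Letter A)

/-- A 2-word: a list of words; the last word is the topmost one. -/
abbrev Stack2 (A : Type) := List (Word A)

/-- The initial level-2 stack `⊥₂`. -/
def bottom2 {A : Type} (bot : A) : Stack2 A := [[Sum.inl bot]]

def top2 {A : Type} (s : Stack2 A) : Option (Word A) := s.getLast?

def top1 {A : Type} (s : Stack2 A) : Option (Letter A) := s.getLast?.bind List.getLast?

def symS {A : Type} (s : Stack2 A) : Option A := (top1 s).map symOf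

def lvlS {A : Type} (s : Stack2 A) : Option ℕ := (top1 s).map lvlOf

def lnkS {A : Type} (s : Stack2 A) : Option ℕ :=
  match top1 s, top2 s with
  | some (Sum.inr (_, j)), _ => some j
  | some (Sum.inl _), some w => some (w.length - 1)
  | _, _ => none

def clone2 {A : Type} (s : Stack2 A) : Option (Stack2 A) :=
  (top2 s).map fun w => s ++ [w]

def push1 {A : Type} [DecidableEq A] (bot a : A) (s : Stack2 A) : Option (Stack2 A) :=
  if a = bot then none else (top2 s).map fun w => s.dropLast ++ [w ++ [Sum.inl a]]

def push2 {A : Type} [DecidableEq A] (bot a : A) (s : Stack2 A) : Option (Stack2 A) :=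
  if a = bot then none else
    (top2 s).map fun w => s.dropLast ++ [w ++ [Sum.inr (a, s.length - 1)]]

def pop2 {A : Type} (s : Stack2 A) : Option (Stack2 A) :=
  if 1 < s.length then some s.dropLast else none

def pop1 {A : Type} (s : Stack2 A) : Option (Stack2 A) :=
  match s.getLast? with
  | some w => if 1 < w.length then some (s.dropLast ++ [w.dropLast]) else none
  | none => none

def collapse {A : Type} (s : Stack2 A) : Option (Stack2 A) :=
  match top1 s with
  | some (Sum.inr (_, k)) => if 0 < k then some (s.take k) else none
  | some (Sum.inl _) => pop1 s
  | none => none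

/-- The level-2 stack operations. -/
inductive Op (A : Type) where
  | clone2 | pop1 | pop2 | collapse
  | push1 (a : A) | push2 (a : A)

def applyOp {A : Type} [DecidableEq A] (bot : A) : Op A → Stack2 A → Option (Stack2 A)
  | .clone2 => clone2
  | .pop1 => pop1
  | .pop2 => pop2
  | .collapse => collapse
  | .push1 a => push1 bot a
  | .push2 a => push2 bot a

/-- `Stacks(Σ)` : the smallest set containing `⊥₂` and closed under the operations. -/
inductive IsStack {A : Type} [DecidableEq A] (bot : A) : Stack2 A → Prop where
  | base : IsStack bot (bottom2 bot)
  | step {s t : Stack2 A} (op : Op A) : IsStack bot s → applyOp bot op s = some t →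
      IsStack bot t

/-- Iterated application of a partial stack operation. -/
def iter {A : Type} (f : Stack2 A → Option (Stack2 A)) : ℕ → Stack2 A → Option (Stack2 A)
  | 0, s => some s
  | n + 1, s => (f s).bind (iter f n)

/-- `t` is a substack of `s`: `t = Pop₁ⁿ(Pop₂ᵐ(s))`. -/
def Substack {A : Type} (t s : Stack2 A) : Prop :=
  ∃ n m, (iter pop2 m s).bind (iter pop1 n) = some t

def ProperSubstack {A : Type} (t s : Stack2 A) : Prop := Substack t s ∧ t ≠ s

/-- `s` is a prefix of `t` (`s ⊑ t`). -/
def StackPrefix {A : Type} (s t : Stack2 A) : Prop :=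
  s ≠ [] ∧ s.length ≤ t.length ∧ s.dropLast <+: t ∧
    ∀ j, s.length - 1 ≤ j → j < t.length → s.getLastD [] <+: t.getD j []

/-- `t[s/u]` : the stack obtained from `t` by replacing the prefix `s` by `u`. -/
def substPrefix {A : Type} (t s u : Stack2 A) : Stack2 A :=
  u.dropLast ++
    (t.drop (s.length - 1)).map fun v => u.getLastD [] ++ v.drop (s.getLastD []).length

/-! ## Collapsible pushdown systems and runs -/

/-- A level-2 collapsible pushdown system. -/
structure CPS (Q A Γ : Type) where
  bot : A
  q0 : Q
  Δ : Set (Q × A × Γ × Q × Op A)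

variable {Q A Γ : Type} [DecidableEq A]

/-- A `γ`-labelled transition realized by the operation `op`. -/
def TransOp (S : CPS Q A Γ) (γ : Γ) (op : Op A) (c c' : Q × Stack2 A) : Prop :=
  ∃ σ : A, symS c.2 = some σ ∧ (c.1, σ, γ, c'.1, op) ∈ S.Δ ∧
    applyOp S.bot op c.2 = some c'.2

def Trans (S : CPS Q A Γ) (γ : Γ) (c c' : Q × Stack2 A) : Prop :=
  ∃ op, TransOp S γ op c c'

/-- A run of a collapsible pushdown system (recording configurations, labels and
operations of each step). -/
structure Run (S : CPS Q A Γ) where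
  len : ℕ
  cfg : ℕ → Q × Stack2 A
  lab : ℕ → Γ
  op : ℕ → Op A
  ok : ∀ i, i < len → TransOp S (lab i) (op i) (cfg i) (cfg (i + 1))

def Run.stk {S : CPS Q A Γ} (ρ : Run S) (i : ℕ) : Stack2 A := (ρ.cfg i).2

/-- The word of labels along a run. -/
def Run.labels {S : CPS Q A Γ} (ρ : Run S) : List Γ :=
  List.ofFn fun i : Fin ρ.len => ρ.lab i

/-- `Reach_L`-reachability: a run from `c` to `c'` labelled by a word in `L`. -/
def ReachL (S : CPS Q A Γ) (L : Language Γ) (c c' : Q × Stack2 A) : Prop :=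
  ∃ ρ : Run S, ρ.cfg 0 = c ∧ ρ.cfg ρ.len = c' ∧ ρ.labels ∈ L

/-- Plain reachability. -/
def Reach (S : CPS Q A Γ) (c c' : Q × Stack2 A) : Prop :=
  ∃ ρ : Run S, ρ.cfg 0 = c ∧ ρ.cfg ρ.len = c'

/-! ## ε-contraction -/

def oneLetterLang (γ : Γ) : Language Γ := {[γ]}

def nonEpsLang (eps : Γ) : Language Γ := {w | ∃ γ : Γ, γ ≠ eps ∧ w = [γ]}

/-- The language `{ε}*`. -/
def epsStar (eps : Γ) : Language Γ := KStar.kstar (oneLetterLang eps)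

/-- The language `({ε}*(Γ∖{ε}))*`. -/
def domLang (eps : Γ) : Language Γ :=
  KStar.kstar (epsStar eps * nonEpsLang eps)

/-- The language `{ε}*γ`. -/
def edgeLang (eps γ : Γ) : Language Γ := epsStar eps * oneLetterLang γ

/-- The vertex set of the ε-contraction `G/ε`. -/
def EpsDomain (S : CPS Q A Γ) (eps : Γ) : Set (Q × Stack2 A) :=
  {c | ReachL S (domLang eps) (S.q0, bottom2 S.bot) c}

/-! ## (Generalised) milestones and the order ≪ -/

/-- `wordAt bot s i` is the word `wᵢ` of `s`, with the convention `w₀ = ⊥`. -/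
def wordAt {A : Type} (bot : A) (s : Stack2 A) (i : ℕ) : Word A :=
  if i = 0 then [Sum.inl bot] else s.getD (i - 1) []

/-- Longest common prefix of two words. -/
def lcp {α : Type} [DecidableEq α] : List α → List α → List α
  | a :: s, b :: t => if a = b then a :: lcp s t else []
  | _, _ => []

/-- `m` is a generalised milestone of `s`. -/
def GenMilestone (bot : A) (s m : Stack2 A) : Prop :=
  ∃ i v, i < s.length ∧ m = s.take i ++ [v] ∧
    lcp (wordAt bot s i) (wordAt bot s (i + 1)) <+: v ∧
    (v <+: wordAt bot s i ∨ v <+: wordAt bot s (i + 1))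

/-- `m` is a milestone of `s`. -/
def Milestone (bot : A) (s m : Stack2 A) : Prop :=
  ∃ i v, i < s.length ∧ m = s.take i ++ [v] ∧
    lcp (wordAt bot s i) (wordAt bot s (i + 1)) <+: v ∧
    v <+: wordAt bot s (i + 1)

def genMilestones (bot : A) (s : Stack2 A) : Set (Stack2 A) := {m | GenMilestone bot s m}

def milestones (bot : A) (s : Stack2 A) : Set (Stack2 A) := {m | Milestone bot s m}

/-- The base cases of the partial order `≪`. -/
def llBase (bot : A) (s t : Stack2 A) : Prop :=
  s.length < t.length ∨
    (s ≠ [] ∧ s.length = t.length ∧ s.dropLast = t.dropLast ∧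
      ((t.getLastD [] <+: s.getLastD [] ∧ t.getLastD [] ≠ s.getLastD [] ∧
          s.getLastD [] <+: wordAt bot s (s.length - 1)) ∨
        (s.getLastD [] <+: t.getLastD [] ∧ s.getLastD [] ≠ t.getLastD [] ∧
          ¬ t.getLastD [] <+: wordAt bot s (s.length - 1))))

/-- The order `≪`: the smallest reflexive transitive relation containing `llBase`. -/
def ll (bot : A) : Stack2 A → Stack2 A → Prop := Relation.ReflTransGen (llBase bot)

/-- `m'` is the ≪-successor of `m` within `genMilestones bot s`. -/
def LlSuccessor (bot : A) (s m m' : Stack2 A) : Prop :=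
  GenMilestone bot s m ∧ GenMilestone bot s m' ∧ m ≠ m' ∧ ll bot m m' ∧
    ∀ m'', GenMilestone bot s m'' → ll bot m m'' → m'' ≠ m → ll bot m' m''

/-! ## Loops, returns and 1-loops -/

/-- The segment `[i,j]` of `ρ` is a loop (of its initial stack). -/
def LoopSeg {S : CPS Q A Γ} (ρ : Run S) (i j : ℕ) : Prop :=
  i ≤ j ∧ j ≤ ρ.len ∧ ρ.stk j = ρ.stk i ∧
    (∀ k, i ≤ k → k ≤ j → ∀ t, pop2 (ρ.stk i) = some t → ¬ Substack (ρ.stk k) t) ∧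
    (∀ k, i ≤ k → k ≤ j → ∀ m, 0 < m → ∀ t, iter pop1 m (ρ.stk i) = some t →
      ρ.stk k = t → ∀ m', m' < m → ∃ t', iter pop1 m' (ρ.stk i) = some t' ∧
        lvlS t' = some 1)

/-- A high loop: a loop that never visits `Pop₁` of its stack. -/
def HighLoopSeg {S : CPS Q A Γ} (ρ : Run S) (i j : ℕ) : Prop :=
  LoopSeg ρ i j ∧ ∀ k, i ≤ k → k ≤ j → ∀ t, pop1 (ρ.stk i) = some t → ρ.stk k ≠ t

/-- A low loop: a loop whose second and second-to-last stacks are `Pop₁` of its stack. -/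
def LowLoopSeg {S : CPS Q A Γ} (ρ : Run S) (i j : ℕ) : Prop :=
  LoopSeg ρ i j ∧ i < j ∧
    ∃ t, pop1 (ρ.stk i) = some t ∧ ρ.stk (i + 1) = t ∧ ρ.stk (j - 1) = t

/-- The common part of the definition of a return on the segment `[i,j]`:
it leads from its initial stack `t` to `Pop₂(t)` and never visits a substack
of `Pop₂(t)` before its final configuration. -/
def RetShell {S : CPS Q A Γ} (ρ : Run S) (i j : ℕ) : Prop :=
  i < j ∧ j ≤ ρ.len ∧ pop2 (ρ.stk i) = some (ρ.stk j) ∧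
    ∀ k, i ≤ k → k < j → ¬ Substack (ρ.stk k) (ρ.stk j)

/-- The segment `[i,j]` of `ρ` is a return (from its initial stack `t` to `Pop₂(t)`). -/
inductive RetSeg {S : CPS Q A Γ} (ρ : Run S) : ℕ → ℕ → Prop where
  | pop2 {i j : ℕ} (h : RetShell ρ i j) (hop : ρ.op (j - 1) = Op.pop2) : RetSeg ρ i j
  | collapse {i j : ℕ} (h : RetShell ρ i j) (hop : ρ.op (j - 1) = Op.collapse)
      (hpre : ∃ w w', top2 (ρ.stk i) = some w ∧ top2 (ρ.stk (j - 1)) = some w' ∧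
        w <+: w' ∧ w ≠ w') : RetSeg ρ i j
  | sub {i k j : ℕ} (h : RetShell ρ i j) (hik : i < k) (hkj : k ≤ j)
      (hpop : pop1 (ρ.stk i) = some (ρ.stk k)) (hret : RetSeg ρ k j) : RetSeg ρ i j

/-- The segment `[i,j]` of `ρ` is a level-1-loop. -/
def OneLoopSeg {S : CPS Q A Γ} (ρ : Run S) (i j : ℕ) : Prop :=
  i ≤ j ∧ j ≤ ρ.len ∧
    ∃ (s : Stack2 A) (w : Word A) (s' : Stack2 A),
      ρ.stk i = s ++ [w] ∧ ρ.stk j = s ++ s' ++ [w] ∧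
      (∀ k, i ≤ k → k ≤ j → s.length < (ρ.stk k).length) ∧
      (∀ k, i ≤ k → k ≤ j → 1 < w.length → top2 (ρ.stk k) = some w.dropLast →
        ∃ m, k < m ∧ m ≤ j ∧ RetSeg ρ k m)

/-! ## ExRet, ExLoop, ... -/

/-- `w↓₀` : replace every level-2 link by `0`. -/
def down0 {A : Type} : Word A → Word A :=
  List.map fun a => match a with
    | Sum.inl x => Sum.inl x
    | Sum.inr (x, _) => Sum.inr (x, 0)

def ExRet (S : CPS Q A Γ) (w : Word A) : Set (Q × Q) :=
  {p | ∃ ρ : Run S, ρ.cfg 0 = (p.1, [down0 w, down0 w]) ∧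
    ρ.cfg ρ.len = (p.2, [down0 w]) ∧ RetSeg ρ 0 ρ.len}

def ExLoop (S : CPS Q A Γ) (w : Word A) : Set (Q × Q) :=
  {p | ∃ ρ : Run S, ρ.cfg 0 = (p.1, [down0 w]) ∧ ρ.cfg ρ.len = (p.2, [down0 w]) ∧
    LoopSeg ρ 0 ρ.len}

def ExHLoop (S : CPS Q A Γ) (w : Word A) : Set (Q × Q) :=
  {p | ∃ ρ : Run S, ρ.cfg 0 = (p.1, [down0 w]) ∧ ρ.cfg ρ.len = (p.2, [down0 w]) ∧
    HighLoopSeg ρ 0 ρ.len}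

def ExLLoop (S : CPS Q A Γ) (w : Word A) : Set (Q × Q) :=
  {p | ∃ ρ : Run S, ρ.cfg 0 = (p.1, [down0 w]) ∧ ρ.cfg ρ.len = (p.2, [down0 w]) ∧
    LowLoopSeg ρ 0 ρ.len}

def ExOneLoop (S : CPS Q A Γ) (w : Word A) : Set (Q × Q) :=
  {p | ∃ (ρ : Run S) (s' : Stack2 A), ρ.cfg 0 = (p.1, [down0 w]) ∧
    ρ.cfg ρ.len = (p.2, s' ++ [down0 w]) ∧ OneLoopSeg ρ 0 ρ.len}

/-! ## Finite binary trees -/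

/-- Finite binary trees with labels in `α` and optional left/right children. -/
inductive PTree (α : Type) where
  | node (a : α) (l r : Option (PTree α)) : PTree α

/-- The label of the node at address `d` (`false` = left/0, `true` = right/1). -/
def PTree.labelAt {α : Type} : PTree α → List Bool → Option α
  | .node a _ _, [] => some a
  | .node _ (some t) _, false :: d => t.labelAt d
  | .node _ none _, false :: _ => none
  | .node _ _ (some t), true :: d => t.labelAt d
  | .node _ _ none, true :: _ => none

def PTree.map {α β : Type} (f : α → β) : PTree α → PTree β
  | .node a l r =>
    .node (f a)
      (match l with | none => none | some t => some (t.map f))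
      (match r with | none => none | some t => some (t.map f))

/-- Convolution of two trees, with `none` as padding symbol `□`. -/
def PTree.conv {α β : Type} : PTree α → PTree β → PTree (Option α × Option β)
  | .node a l r, .node b l' r' =>
    .node (some a, some b)
      (match l, l' with
        | none, none => none
        | some t, none => some (t.map fun x => (some x, none))
        | none, some u => some (u.map fun x => (none, some x))
        | some t, some u => some (PTree.conv t u))
      (match r, r' with
        | none, none => none
        | some t, none => some (t.map fun x => (some x, none))
        | none, some u => some (u.map fun x => (none, some x))
        | some t, some u => some (PTree.conv t u))

/-- A (bottom-up nondeterministic) finite tree automaton. -/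
structure TreeAut (α : Type) where
  St : Type
  fin : Finite St
  qI : St
  F : Set St
  Δ : Set (St × α × St × St)

/-- Acceptance of a finite tree by a tree automaton. -/
def TreeAut.Accepts {α : Type} (M : TreeAut α) (t : PTree α) : Prop :=
  ∃ ρ : List Bool → M.St,
    (∀ d, t.labelAt d = none → ρ d = M.qI) ∧
    (∀ d a, t.labelAt d = some a → (ρ d, a, ρ (d ++ [false]), ρ (d ++ [true])) ∈ M.Δ) ∧
    ρ [] ∈ M.F

/-- A family of binary relations on `B` is tree-automatic. -/
def IsTreeAutomatic {B : Type} {I : Type} (E : I → B → B → Prop) : Prop :=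
  ∃ (α : Type) (_ : Finite α) (AB : TreeAut α) (AE : I → TreeAut (Option α × Option α))
    (f : {t : PTree α // AB.Accepts t} → B),
    Function.Bijective f ∧
      ∀ (i : I) (t₁ t₂ : {t : PTree α // AB.Accepts t}),
        (AE i).Accepts (PTree.conv t₁.1 t₂.1) ↔ E i (f t₁) (f t₂)

/-! ## The encoding of configurations as trees -/

/-- Labels of encoding trees: a state, a pair (symbol, link level), or `ε`. -/
abbrev EncLabel (Q A : Type) := Q ⊕ ((A × ℕ) ⊕ Unit)

def epsLab {Q A : Type} : EncLabel Q A := Sum.inr (Sum.inr ())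

def symLab {Q A : Type} (τ : Letter A) : EncLabel Q A := Sum.inr (Sum.inl (symOf τ, lvlOf τ))

/-- Encoding of blocklines as trees (with a fuel parameter driving the recursion;
the fuel used in `encStack` is large enough so that it never runs out on actual
blocklines). The left subtree encodes the blockline induced by the first maximal
block, the right subtree the remaining blocks. -/
def encBL (Q : Type) {A : Type} [DecidableEq A] :
    ℕ → EncLabel Q A → List (Word A) → PTree (EncLabel Q A)
  | 0, σ, _ => .node σ none none
  | _ + 1, σ, [] => .node σ none none
  | fuel + 1, σ, w :: rest =>
    if w.length ≤ 1 then
      match rest with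
      | [] => .node σ none none
      | _ :: _ => .node σ none (some (encBL Q fuel epsLab rest))
    else
      let p : Word A → Bool := fun v => decide (v.take 2 = w.take 2)
      let blk := (w :: rest).takeWhile p
      let restBlk := (w :: rest).dropWhile p
      .node σ
        (some (encBL Q fuel
          (match w[1]? with | some τ' => symLab τ' | none => epsLab)
          (blk.map List.tail)))
        (match restBlk with
          | [] => none
          | _ :: _ => some (encBL Q fuel epsLab restBlk))

/-- The total number of letters of a 2-word. -/
def size2 {A : Type} (s : Stack2 A) : ℕ := (s.map List.length).sum

/-- The encoding `Enc(s) = Enc(s, (⊥,1))` of a stack. -/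
def encStack (Q : Type) {A : Type} [DecidableEq A] (bot : A) (s : Stack2 A) :
    PTree (EncLabel Q A) :=
  encBL Q (size2 s + 1) (Sum.inr (Sum.inl (bot, 1))) s

/-- The encoding of a configuration: the state at the root, `Enc(s)` as left subtree. -/
def Enc {Q A : Type} [DecidableEq A] (bot : A) (c : Q × Stack2 A) : PTree (EncLabel Q A) :=
  .node (Sum.inl c.1) (some (encStack Q bot c.2)) none

/-- The class `EncTrees` of encoding trees. -/
def EncTrees (Q A : Type) (bot : A) : Set (PTree (EncLabel Q A)) :=
  {T | (∃ q : Q, T.labelAt [] = some (Sum.inl q)) ∧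
    T.labelAt [true] = none ∧ T.labelAt [false] ≠ none ∧
    T.labelAt [false] = some (Sum.inr (Sum.inl (bot, 1))) ∧
    (∀ (d : List Bool) (x : EncLabel Q A),
      T.labelAt (false :: (d ++ [false])) = some x →
        ∃ (σ : A) (l : ℕ), σ ≠ bot ∧ (l = 1 ∨ l = 2) ∧ x = Sum.inr (Sum.inl (σ, l))) ∧
    (∀ (d : List Bool) (x : EncLabel Q A), T.labelAt (d ++ [true]) = some x → x = epsLab) ∧
    (∀ (d : List Bool) (σ : A), ¬ (T.labelAt (d ++ [false]) = some (Sum.inr (Sum.inl (σ, 1))) ∧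
      T.labelAt (d ++ [true, false]) = some (Sum.inr (Sum.inl (σ, 1)))))}

/-- Restriction of a tree to the nodes lexicographically ≤ `d`. -/
def restrictLex {α : Type} : PTree α → List Bool → PTree α
  | .node a _ _, [] => .node a none none
  | .node a l _, false :: d =>
      .node a (match l with | none => none | some t => some (restrictLex t d)) none
  | .node a l r, true :: d =>
      .node a l (match r with | none => none | some t => some (restrictLex t d))

/-- The lexicographic order on tree addresses. -/
def lexLe (d e : List Bool) : Prop :=
  d <+: e ∨ ∃ (c x y : List Bool), d = c ++ false :: x ∧ e = c ++ true :: y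

/-! ## Deterministic finite automata with output (Moore machines) -/

structure Moore (α ω : Type) where
  St : Type
  fin : Finite St
  init : St
  step : St → α → St
  out : St → ω

def Moore.output {α ω : Type} (M : Moore α ω) (w : List α) : ω :=
  M.out (w.foldl M.step M.init)

/-! ### Operations on stacks of the form `L ++ [x]` -/

set_option linter.unusedSectionVars false

section Ops

lemma nil_or_snoc {α : Type} (l : List α) : l = [] ∨ ∃ L x, l = L ++ [x] := by
  rcases List.eq_nil_or_concat l with h | ⟨L, x, h⟩
  · exact .inl h
  · exact .inr ⟨L, x, by simpa using h⟩

lemma clone2_snoc (L : Stack2 A) (x : Word A) : clone2 (L ++ [x]) = some (L ++ [x] ++ [x]) := by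
  simp [clone2, top2]

lemma push1_snoc (bot b : A) (L : Stack2 A) (x : Word A) :
    push1 bot b (L ++ [x]) = if b = bot then none else some (L ++ [x ++ [Sum.inl b]]) := by
  simp [push1, top2]

lemma push2_snoc (bot b : A) (L : Stack2 A) (x : Word A) :
    push2 bot b (L ++ [x]) =
      if b = bot then none else some (L ++ [x ++ [Sum.inr (b, L.length)]]) := by
  simp [push2, top2]

lemma pop2_snoc (L : Stack2 A) (x : Word A) :
    pop2 (L ++ [x]) = if 0 < L.length then some L else none := by
  simp [pop2]

lemma pop1_snoc (L : Stack2 A) (x : Word A) :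
    pop1 (L ++ [x]) = if 1 < x.length then some (L ++ [x.dropLast]) else none := by
  simp [pop1]

lemma top1_snoc (L : Stack2 A) (x : Word A) : top1 (L ++ [x]) = x.getLast? := by
  simp [top1]

end Ops

/-! ### Step relation and returns as big-step relation -/

def StepR (S : CPS Q A Γ) (c d : Q × Stack2 A) : Prop :=
  ∃ γ op, TransOp S γ op c d

/-- A path of length `n` from `c` to `c'` such that exactly the last configuration has
width at most `k`. -/
inductive Ret (S : CPS Q A Γ) (k : ℕ) :
    Q × Stack2 A → Q × Stack2 A → ℕ → Prop where
  | done {c} (h : c.2.length ≤ k) : Ret S k c c 0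
  | step {c c' c'' n} (h : k < c.2.length) (hs : StepR S c c') (hr : Ret S k c' c'' n) :
      Ret S k c c'' (n + 1)

section Sim
variable {S : CPS Q A Γ}

lemma Ret.split {k l n : ℕ} (hkl : k ≤ l) {c c'' : Q × Stack2 A} (h : Ret S k c c'' n) :
    ∃ c' n1 n2, Ret S l c c' n1 ∧ Ret S k c' c'' n2 ∧ n1 + n2 = n := by
  induction h with
  | @done c h => exact ⟨c, 0, 0, .done (h.trans hkl), .done h, rfl⟩
  | @step c c1 c'' n h hs hr ih =>
    by_cases hl : c.2.length ≤ l
    · exact ⟨c, 0, n + 1, .done hl, .step h hs hr, by omega⟩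
    · obtain ⟨c', n1, n2, h1, h2, h3⟩ := ih
      exact ⟨c', n1 + 1, n2, .step (by omega) hs h1, h2, by omega⟩

lemma Ret.trans {k l n m : ℕ} (hkl : k ≤ l) {c c' c'' : Q × Stack2 A} (h : Ret S l c c' n)
    (h' : Ret S k c' c'' m) : ∃ n', Ret S k c c'' n' := by
  induction h with
  | done h => exact ⟨m, h'⟩
  | step h hs hr ih =>
    obtain ⟨n', hn⟩ := ih h'
    exact ⟨n' + 1, .step (by omega) hs hn⟩

/-- Letters related up to a shift of the level-2 links. -/
inductive LR (k l : ℕ) : Letter A → Letter A → Prop where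
  | one (a : A) : LR k l (Sum.inl a) (Sum.inl a)
  | zero (a : A) : LR k l (Sum.inr (a, 0)) (Sum.inr (a, 0))
  | shift (a : A) (i : ℕ) : LR k l (Sum.inr (a, k + i)) (Sum.inr (a, l + i))

inductive WR (k l : ℕ) (v v' : Word A) : Word A → Word A → Prop where
  | mk {p p' : Word A} {a a' : Letter A} (hp : List.Forall₂ (LR k l) p p') (ha : LR k l a a') :
      WR k l v v' (v ++ p ++ [a]) (v' ++ p' ++ [a'])

def RetTransfer (S : CPS Q A Γ) (v v' : Word A) : Prop :=
  ∀ (q : Q) (c : Q × Stack2 A) (s t : Stack2 A) (n : ℕ), s ≠ [] → t ≠ [] →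
    Ret S s.length (q, s ++ [v]) c n →
    ∃ q' m, c = (q', s) ∧ Ret S t.length (q, t ++ [v']) (q', t) m

lemma WR.snoc {k l : ℕ} {v v' x y : Word A} (h : WR k l v v' x y) {a a' : Letter A}
    (ha : LR k l a a') : WR k l v v' (x ++ [a]) (y ++ [a']) := by
  cases h with
  | @mk p p' b b' hp hb =>
    have := WR.mk (v := v) (v' := v') (p := p ++ [b]) (p' := p' ++ [b'])
      (List.rel_append hp (.cons hb .nil)) ha
    simpa using this

lemma forall2_snoc {α β : Type} {R : α → β → Prop} {X : List α} {Y : List β} {x : α} {y : β}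
    (h : List.Forall₂ R X Y) (hx : R x y) : List.Forall₂ R (X ++ [x]) (Y ++ [y]) :=
  List.rel_append h (.cons hx .nil)

lemma forall2_snoc_cases {α β : Type} {R : α → β → Prop} {X : List α} {Y : List β}
    (h : List.Forall₂ R X Y) : (X = [] ∧ Y = []) ∨ ∃ X0 x Y0 y, X = X0 ++ [x] ∧ Y = Y0 ++ [y] ∧
      List.Forall₂ R X0 Y0 ∧ R x y := by
  induction h with
  | nil => exact .inl ⟨rfl, rfl⟩
  | @cons a b l1 l2 hab hl ih =>
    right
    rcases ih with ⟨rfl, rfl⟩ | ⟨X0, x, Y0, y, rfl, rfl, h0, hx⟩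
    · exact ⟨[], a, [], b, rfl, rfl, .nil, hab⟩
    · exact ⟨a :: X0, x, b :: Y0, y, rfl, rfl, .cons hab h0, hx⟩

/-- The central simulation. -/
lemma sim (v v' : Word A) (hnil : v = [] ↔ v' = []) (H : v ≠ [] → RetTransfer S v v')
    (s t : Stack2 A) (hs : s ≠ []) (ht : t ≠ []) (n : ℕ) :
    ∀ (X Y : Stack2 A) (q : Q) (c : Q × Stack2 A),
      List.Forall₂ (WR s.length t.length v v') X Y → Ret S s.length (q, s ++ X) c n →
      ∃ q' m, c = (q', s) ∧ Ret S t.length (q, t ++ Y) (q', t) m := by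
  have hs0 : 0 < s.length := List.length_pos_iff.2 hs
  have ht0 : 0 < t.length := List.length_pos_iff.2 ht
  induction n using Nat.strong_induction_on with
  | _ n IH =>
  intro X Y q c hXY hr
  rcases forall2_snoc_cases hXY with ⟨rfl, rfl⟩ | ⟨X0, x, Y0, y, rfl, rfl, h0, hx⟩
  · cases hr with
    | done h => exact ⟨q, 0, by simp, by simpa using Ret.done (S := S) (k := t.length) (c := (q, t)) le_rfl⟩
    | step h => simp at h
  have hlen : X0.length = Y0.length := h0.length_eq
  cases hr with
  | done h => simp at h
  | @step _ c1 _ n h hst hr =>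
  obtain ⟨q1, s1⟩ := c1
  obtain ⟨γ, op, σ, hsym, hΔ, hop⟩ := hst
  have hwid : t.length < (t ++ (Y0 ++ [y])).length := by simp
  have hsym' : symS (t ++ (Y0 ++ [y])) = some σ := by
    cases hx with
    | @mk p p' a a' hp ha =>
      simp only [symS, ← List.append_assoc, top1_snoc] at hsym ⊢
      cases ha <;> simpa [symOf] using hsym
  -- continuing after a simulated step
  have cont : ∀ X1 Y1, s1 = s ++ X1 → applyOp S.bot op (t ++ (Y0 ++ [y])) = some (t ++ Y1) →
      List.Forall₂ (WR s.length t.length v v') X1 Y1 →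
      ∃ q' m, c = (q', s) ∧ Ret S t.length (q, t ++ (Y0 ++ [y])) (q', t) m := by
    intro X1 Y1 h1 h2 h3
    subst h1
    obtain ⟨q', m, hc, hm⟩ := IH n (by omega) X1 Y1 q1 c h3 hr
    exact ⟨q', m + 1, hc, .step (c' := (q1, t ++ Y1)) hwid ⟨γ, op, σ, hsym', hΔ, h2⟩ hm⟩
  -- the pop1 case, also used for collapse
  have popcase : pop1 (s ++ (X0 ++ [x])) = some s1 →
      (∀ u, pop1 (t ++ (Y0 ++ [y])) = some u → applyOp S.bot op (t ++ (Y0 ++ [y])) = some u) →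
      ∃ q' m, c = (q', s) ∧ Ret S t.length (q, t ++ (Y0 ++ [y])) (q', t) m := by
    intro hp1 hp2
    cases hx with
    | @mk p p' a a' hp ha =>
      rw [← List.append_assoc, pop1_snoc] at hp1
      split_ifs at hp1 with hl
      simp only [List.dropLast_concat, Option.some.injEq] at hp1
      rcases forall2_snoc_cases hp with ⟨rfl, rfl⟩ | ⟨p0, b, p0', b', rfl, rfl, hp0, hb⟩
      · have hv : v ≠ [] := by rintro rfl; simp at hl
        have hv' : v' ≠ [] := fun h => hv (hnil.2 h)
        have hvl : 0 < v'.length := List.length_pos_iff.2 hv'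
        simp only [List.append_nil] at hp1 hp2 hwid hsym' ⊢
        subst hp1
        obtain ⟨c2, n1, n2, hr1, hr2, hn⟩ := hr.split (l := (s ++ X0).length) (by simp)
        obtain ⟨q2, m1, rfl, hm1⟩ := H hv q1 c2 (s ++ X0) (t ++ Y0) n1 (by simp [hs]) (by simp [ht]) hr1
        obtain ⟨q', m2, hc, hm2⟩ := IH n2 (by omega) X0 Y0 q2 c h0 hr2
        obtain ⟨m, hm⟩ := hm1.trans (k := t.length) (by simp) hm2
        refine ⟨q', m + 1, hc, .step (c' := (q1, t ++ Y0 ++ [v'])) hwid ⟨γ, op, σ, hsym', hΔ, hp2 _ ?_⟩ hm⟩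
        rw [← List.append_assoc, pop1_snoc, if_pos (by simp; omega)]
        simp
      · refine cont (X0 ++ [v ++ (p0 ++ [b])]) (Y0 ++ [v' ++ (p0' ++ [b'])]) ?_ (hp2 _ ?_) ?_
        · rw [← hp1]; simp
        · rw [← List.append_assoc, pop1_snoc, if_pos (by simp; omega), List.dropLast_concat]; simp
        · refine forall2_snoc h0 ?_
          rw [← List.append_assoc, ← List.append_assoc]
          exact .mk hp0 hb
  cases op with
  | clone2 =>
    simp only [applyOp, ← List.append_assoc, clone2_snoc, Option.some.injEq] at hop
    refine cont (X0 ++ [x] ++ [x]) (Y0 ++ [y] ++ [y]) (by simp [← hop]) ?_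
      (forall2_snoc (forall2_snoc h0 hx) hx)
    simp only [applyOp, ← List.append_assoc, clone2_snoc]
  | push1 b =>
    simp only [applyOp, ← List.append_assoc, push1_snoc] at hop
    split_ifs at hop with hb
    simp only [Option.some.injEq] at hop
    refine cont (X0 ++ [x ++ [Sum.inl b]]) (Y0 ++ [y ++ [Sum.inl b]]) (by simp [← hop]) ?_
      (forall2_snoc h0 (hx.snoc (.one b)))
    simp only [applyOp, ← List.append_assoc, push1_snoc, if_neg hb]
  | push2 b =>
    simp only [applyOp, ← List.append_assoc, push2_snoc] at hop
    split_ifs at hop with hb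
    simp only [Option.some.injEq] at hop
    refine cont (X0 ++ [x ++ [Sum.inr (b, s.length + X0.length)]])
      (Y0 ++ [y ++ [Sum.inr (b, t.length + X0.length)]]) (by simp [← hop]) ?_
      (forall2_snoc h0 (hx.snoc (.shift b _)))
    simp only [applyOp, ← List.append_assoc, push2_snoc, if_neg hb, List.length_append, hlen]
  | pop2 =>
    simp only [applyOp, ← List.append_assoc, pop2_snoc] at hop
    split_ifs at hop with hb
    simp only [Option.some.injEq] at hop
    refine cont X0 Y0 hop.symm ?_ h0
    simp only [applyOp, ← List.append_assoc, pop2_snoc]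
    rw [if_pos (by simp; omega)]
  | pop1 => exact popcase hop (fun u hu => hu)
  | collapse =>
    have hx' := hx
    cases hx' with
    | @mk p p' a a' hp ha =>
    have htop : top1 (s ++ (X0 ++ [v ++ p ++ [a]])) = some a := by
      rw [← List.append_assoc, top1_snoc]; simp
    have htop' : top1 (t ++ (Y0 ++ [v' ++ p' ++ [a']])) = some a' := by
      rw [← List.append_assoc, top1_snoc]; simp
    simp only [applyOp, collapse, htop] at hop
    simp only [applyOp, collapse, htop'] at cont popcase
    cases ha with
    | one b => exact popcase hop (fun u hu => hu)
    | zero b => simp at hop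
    | shift b i =>
      simp only at hop cont
      rw [if_pos (by omega)] at hop
      rw [if_pos (by omega)] at cont
      simp only [Option.some.injEq, List.take_length_add_append] at hop cont
      exact cont _ _ hop.symm rfl (List.forall₂_take i hXY)

def ZeroLinks (w : Word A) : Prop := ∀ a k, Sum.inr (a, k) ∈ w → k = 0

lemma LR_refl {w : Word A} (h : ZeroLinks w) (k l : ℕ) : List.Forall₂ (LR k l) w w := by
  induction w with
  | nil => exact .nil
  | cons a w ih =>
    refine .cons ?_ (ih fun b k hb => h b k (List.mem_cons_of_mem _ hb))
    rcases a with a | ⟨a, j⟩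
    · exact .one a
    · obtain rfl := h a j (by simp)
      exact .zero a

/-- Returns from zero-link words do not depend on the stack below. -/
lemma transfer_self {u : Word A} (hu : u ≠ []) (h : ZeroLinks u) : RetTransfer S u u := by
  intro q c s t n hs ht hr
  refine sim [] [] Iff.rfl (fun h => absurd rfl h) s t hs ht n [u] [u] q c (.cons ?_ .nil) hr
  have h2 := LR_refl h s.length t.length
  rcases forall2_snoc_cases h2 with ⟨h3, _⟩ | ⟨p, a, p', a', h3, h4, hp, ha⟩
  · exact absurd h3 hu
  · have := WR.mk (v := []) (v' := []) hp ha
    simp only [List.nil_append] at this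
    rwa [← h3, ← h4] at this

def RelRet (S : CPS Q A Γ) (u : Word A) : Set (Q × Q) :=
  {p | ∃ n, Ret S 1 (p.1, [u, u]) (p.2, [u]) n}

lemma transfer_of_relRet {v v' : Word A} (hv : v ≠ []) (hv' : v' ≠ []) (hz : ZeroLinks v)
    (hz' : ZeroLinks v') (h : RelRet S v ⊆ RelRet S v') : RetTransfer S v v' := by
  intro q c s t n hs ht hr
  obtain ⟨q', m, hc, hm⟩ := transfer_self hv hz q c s [v] n hs (by simp) hr
  obtain ⟨m', hm'⟩ := h (show (q, q') ∈ RelRet S v from ⟨m, hm⟩)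
  obtain ⟨q'', m'', hc'', hm''⟩ := transfer_self hv' hz' q (q', [v']) [v'] t m' (by simp) ht hm'
  obtain rfl : q' = q'' := congrArg Prod.fst hc''
  exact ⟨q', m'', hc, hm''⟩

lemma relRet_mono {v v' : Word A} {a a' : Letter A} (hv : v ≠ []) (hv' : v' ≠ [])
    (hz : ZeroLinks v) (hz' : ZeroLinks v') (ha : LR 1 1 a a')
    (h : RelRet S v ⊆ RelRet S v') : RelRet S (v ++ [a]) ⊆ RelRet S (v' ++ [a']) := by
  rintro ⟨q, q'⟩ ⟨n, hn⟩
  have := sim v v' (by simp [hv, hv']) (fun _ => transfer_of_relRet hv hv' hz hz' h)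
    [v ++ [a]] [v' ++ [a']] (by simp) (by simp) n [v ++ [a]] [v' ++ [a']] q (q', [v ++ [a]])
    (.cons (by simpa using WR.mk (v := v) (v' := v') .nil ha) .nil) hn
  obtain ⟨q'', m, hc, hm⟩ := this
  obtain rfl : q' = q'' := congrArg Prod.fst hc
  exact ⟨m, hm⟩

/-! ### Relating `ExRet` and `RelRet` -/

lemma zeroLinks_down0 (w : Word A) : ZeroLinks (down0 w) := by
  intro a k h
  simp only [down0, List.mem_map] at h
  obtain ⟨b, _, hb⟩ := h
  rcases b with b | ⟨b, j⟩
  · simp at hb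
  · simp at hb; exact hb.2.symm

lemma run_to_ret (ρ : Run S) (k : ℕ) (hk : ∀ i < ρ.len, k < (ρ.stk i).length)
    (hl : (ρ.stk ρ.len).length ≤ k) (d : ℕ) :
    ∀ i, i + d = ρ.len → Ret S k (ρ.cfg i) (ρ.cfg ρ.len) d := by
  induction d with
  | zero => intro i hi; obtain rfl : i = ρ.len := by omega
            exact .done hl
  | succ d ih =>
    intro i hi
    exact .step (hk i (by omega)) ⟨_, _, ρ.ok i (by omega)⟩ (ih (i + 1) (by omega))

lemma ret_to_run {k n : ℕ} {c c' : Q × Stack2 A} (g : Γ) (h : Ret S k c c' n) :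
    ∃ ρ : Run S, ρ.len = n ∧ ρ.cfg 0 = c ∧ ρ.cfg n = c' ∧ ∀ i < n, k < (ρ.stk i).length := by
  induction h with
  | @done c h =>
    exact ⟨⟨0, fun _ => c, fun _ => g, fun _ => .pop2, by simp⟩, rfl, rfl, rfl, by simp⟩
  | @step c c1 c'' n h hs hr ih =>
    obtain ⟨ρ, h1, h2, h3, h4⟩ := ih
    obtain ⟨γ, op, hs⟩ := hs
    refine ⟨⟨n + 1, fun i => Nat.casesOn i c ρ.cfg, fun i => Nat.casesOn i γ ρ.lab,
      fun i => Nat.casesOn i op ρ.op, ?_⟩, rfl, rfl, h3, ?_⟩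
    · intro i hi
      cases i with
      | zero => simpa [h2] using hs
      | succ i => exact ρ.ok i (by omega)
    · intro i hi
      cases i with
      | zero => exact h
      | succ i => exact h4 i (by omega)

lemma iter_pop1_length {n : ℕ} : ∀ {s t : Stack2 A}, iter pop1 n s = some t →
    t.length ≤ s.length := by
  induction n with
  | zero => intro s t h; simp only [iter, Option.some.injEq] at h; rw [h]
  | succ n ih =>
    intro s t h
    simp only [iter, Option.bind_eq_some_iff] at h
    obtain ⟨u, hu, h⟩ := h
    refine (ih h).trans ?_
    rcases nil_or_snoc s with rfl | ⟨L, x, rfl⟩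
    · simp [pop1] at hu
    · rw [pop1_snoc] at hu
      split_ifs at hu
      simp only [Option.some.injEq] at hu
      simp [← hu]

lemma iter_pop2_length {n : ℕ} : ∀ {s t : Stack2 A}, iter pop2 n s = some t →
    t.length ≤ s.length := by
  induction n with
  | zero => intro s t h; simp only [iter, Option.some.injEq] at h; rw [h]
  | succ n ih =>
    intro s t h
    simp only [iter, Option.bind_eq_some_iff] at h
    obtain ⟨u, hu, h⟩ := h
    refine (ih h).trans ?_
    simp only [pop2] at hu
    split_ifs at hu
    simp only [Option.some.injEq] at hu
    simp [← hu]

lemma Substack.length_le {s t : Stack2 A} (h : Substack t s) : t.length ≤ s.length := by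
  obtain ⟨n, m, h⟩ := h
  simp only [Option.bind_eq_some_iff] at h
  obtain ⟨u, hu, h⟩ := h
  exact (iter_pop1_length h).trans (iter_pop2_length hu)

lemma Substack.refl (s : Stack2 A) : Substack s s := ⟨0, 0, rfl⟩

/-- A step from a stack of width at least two with bottom word `w`. -/
lemma head_step {bot : A} {w : Word A} {op : Op A} {s t : Stack2 A} (hs : 1 < s.length)
    (hh : s.head? = some w) (h : applyOp bot op s = some t) :
    (1 < t.length ∧ t.head? = some w) ∨ t = [w] := by
  rcases nil_or_snoc s with rfl | ⟨L, x, rfl⟩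
  · simp at hs
  rcases L with _ | ⟨w1, L⟩
  · simp at hs
  simp only [List.cons_append, List.head?_cons, Option.some.injEq] at hh
  subst hh
  have hpop1 : pop1 (w1 :: L ++ [x]) = some t →
      (1 < t.length ∧ t.head? = some w1) ∨ t = [w1] := by
    intro h
    rw [pop1_snoc] at h
    split_ifs at h
    simp only [Option.some.injEq] at h
    simp [← h]
  cases op with
  | clone2 => simp only [applyOp, clone2_snoc, Option.some.injEq] at h; simp [← h]
  | push1 b =>
    simp only [applyOp, push1_snoc] at h
    split_ifs at h
    simp only [Option.some.injEq] at h; simp [← h]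
  | push2 b =>
    simp only [applyOp, push2_snoc] at h
    split_ifs at h
    simp only [Option.some.injEq] at h; simp [← h]
  | pop2 =>
    simp only [applyOp, pop2_snoc] at h
    split_ifs at h
    simp only [Option.some.injEq] at h
    subst h
    cases L <;> simp
  | pop1 => exact hpop1 h
  | collapse =>
    simp only [applyOp, collapse, top1_snoc] at h
    split at h
    · split_ifs at h with hk
      rename_i k _
      simp only [Option.some.injEq] at h
      subst h
      obtain ⟨k, rfl⟩ : ∃ k', k = k' + 1 := ⟨k - 1, by omega⟩
      rcases k with _ | k
      · simp
      · left; simp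
    · exact hpop1 h
    · simp at h

/-- Invariant used to recognise returns. -/
def Inv (w u : Word A) (s : Stack2 A) : Prop :=
  ∃ y r, s = w :: y :: r ∧ u <+: y ∧ ∀ z ∈ r, u <+: z ∨ ∀ a, Sum.inr (a, 1) ∉ z

lemma prefix_dropLast {α : Type} {u x : List α} (h : u <+: x) (hne : u ≠ x) :
    u <+: x.dropLast := by
  obtain ⟨z, rfl⟩ := h
  rcases nil_or_snoc z with rfl | ⟨z, b, rfl⟩
  · simp at hne
  · rw [← List.append_assoc, List.dropLast_concat]; simp

lemma inv_step {bot : A} {w u : Word A} (hz : ZeroLinks u) {op : Op A} {s t : Stack2 A}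
    (hs : Inv w u s) (h : applyOp bot op s = some t) (ht : 1 < t.length) :
    Inv w u t ∨ (1 < u.length ∧ t = [w, u.dropLast]) := by
  obtain ⟨y, r, rfl, hy, hr⟩ := hs
  rcases nil_or_snoc r with rfl | ⟨r, x, rfl⟩
  · have e : [w, y] = [w] ++ [y] := rfl
    have hpop1 : pop1 [w, y] = some t → Inv w u t ∨ (1 < u.length ∧ t = [w, u.dropLast]) := by
      intro h
      rw [e, pop1_snoc] at h
      split_ifs at h with hl
      simp only [Option.some.injEq] at h
      subst h
      by_cases hu : u = y
      · subst hu; exact .inr ⟨hl, rfl⟩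
      · exact .inl ⟨_, [], rfl, prefix_dropLast hy hu, by simp⟩
    cases op with
    | clone2 =>
      simp only [applyOp, e, clone2_snoc, Option.some.injEq] at h
      subst h
      exact .inl ⟨y, [y], rfl, hy, by simp [hy]⟩
    | push1 b =>
      simp only [applyOp, e, push1_snoc] at h
      split_ifs at h
      simp only [Option.some.injEq] at h
      subst h
      exact .inl ⟨_, [], rfl, hy.trans (List.prefix_append _ _), by simp⟩
    | push2 b =>
      simp only [applyOp, e, push2_snoc] at h
      split_ifs at h
      simp only [Option.some.injEq] at h
      subst h
      exact .inl ⟨_, [], rfl, hy.trans (List.prefix_append _ _), by simp⟩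
    | pop2 =>
      simp only [applyOp, e, pop2_snoc] at h
      split_ifs at h
      simp only [Option.some.injEq] at h
      subst h
      simp at ht
    | pop1 => exact hpop1 h
    | collapse =>
      simp only [applyOp, collapse] at h
      split at h
      · split_ifs at h with hk
        rename_i k _
        simp only [Option.some.injEq] at h
        subst h
        simp only [List.length_take] at ht
        obtain ⟨k, rfl⟩ : ∃ k', k = k' + 2 := ⟨k - 2, by omega⟩
        exact .inl ⟨y, [], by simp, hy, by simp⟩
      · exact hpop1 h
      · simp at h
  · have e : w :: y :: (r ++ [x]) = (w :: y :: r) ++ [x] := rfl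
    have hr0 : ∀ z ∈ r, u <+: z ∨ ∀ a, Sum.inr (a, 1) ∉ z := fun z hz => hr z (by simp [hz])
    have hx : u <+: x ∨ ∀ a, Sum.inr (a, 1) ∉ x := hr x (by simp)
    have key : ∀ x' : Word A, (u <+: x' ∨ ∀ a, Sum.inr (a, 1) ∉ x') →
        Inv w u ((w :: y :: r) ++ [x']) := by
      intro x' hx'
      refine ⟨y, r ++ [x'], rfl, hy, ?_⟩
      intro z hz
      simp only [List.mem_append, List.mem_singleton] at hz
      rcases hz with hz | rfl
      · exact hr0 z hz
      · exact hx'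
    have hpop1 : pop1 ((w :: y :: r) ++ [x]) = some t → Inv w u t := by
      intro h
      rw [pop1_snoc] at h
      split_ifs at h with hl
      simp only [Option.some.injEq] at h
      subst h
      apply key
      rcases hx with hx | hx
      · by_cases hu : u = x
        · subst hu
          right; intro a ha
          exact absurd (hz a 1 (List.mem_of_mem_dropLast ha)) (by simp)
        · exact .inl (prefix_dropLast hx hu)
      · exact .inr fun a ha => hx a (List.mem_of_mem_dropLast ha)
    left
    cases op with
    | clone2 =>
      simp only [applyOp, e, clone2_snoc, Option.some.injEq] at h
      subst h
      refine ⟨y, r ++ [x] ++ [x], rfl, hy, ?_⟩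
      intro z hz
      simp only [List.mem_append, List.mem_singleton] at hz
      rcases hz with (hz | rfl) | rfl
      · exact hr0 z hz
      · exact hx
      · exact hx
    | push1 b =>
      simp only [applyOp, e, push1_snoc] at h
      split_ifs at h
      simp only [Option.some.injEq] at h
      subst h
      apply key
      rcases hx with hx | hx
      · exact .inl (hx.trans (List.prefix_append _ _))
      · right; intro a ha; simp at ha; exact hx a ha
    | push2 b =>
      simp only [applyOp, e, push2_snoc] at h
      split_ifs at h
      simp only [Option.some.injEq] at h
      subst h
      apply key
      rcases hx with hx | hx
      · exact .inl (hx.trans (List.prefix_append _ _))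
      · right; intro a ha; simp at ha; exact hx a ha
    | pop2 =>
      simp only [applyOp, e, pop2_snoc] at h
      split_ifs at h
      simp only [Option.some.injEq] at h
      subst h
      exact ⟨y, r, rfl, hy, hr0⟩
    | pop1 => exact hpop1 h
    | collapse =>
      simp only [applyOp, collapse] at h
      split at h
      · split_ifs at h with hk
        rename_i k _
        simp only [Option.some.injEq] at h
        subst h
        simp only [List.length_take] at ht
        obtain ⟨k, rfl⟩ : ∃ k', k = k' + 2 := ⟨k - 2, by omega⟩
        refine ⟨y, (r ++ [x]).take k, by simp, hy, ?_⟩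
        intro z hz
        exact hr z (by simpa using List.mem_of_mem_take hz)
      · exact hpop1 h
      · simp at h

/-- The last step of a return. -/
lemma last_step {bot : A} {w u : Word A} (hz : ZeroLinks u) {op : Op A} {s t : Stack2 A}
    (hs : Inv w u s) (h : applyOp bot op s = some t) (ht : t.length = 1) :
    op = .pop2 ∨ (op = .collapse ∧ ∃ w', top2 s = some w' ∧ u <+: w' ∧ u ≠ w') := by
  obtain ⟨y, r, rfl, hy, hr⟩ := hs
  obtain ⟨L, x, hL, e, hx⟩ : ∃ L x, 0 < L.length ∧ w :: y :: r = L ++ [x] ∧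
      (u <+: x ∨ ∀ a, Sum.inr (a, 1) ∉ x) := by
    rcases nil_or_snoc r with rfl | ⟨r, x, rfl⟩
    · exact ⟨[w], y, by simp, rfl, .inl hy⟩
    · exact ⟨w :: y :: r, x, by simp, by simp, hr x (by simp)⟩
  have hlen : (w :: y :: r).length = L.length + 1 := by rw [e]; simp
  rw [e] at h ⊢
  have hpop1 : pop1 (L ++ [x]) = some t → False := by
    intro h
    rw [pop1_snoc] at h
    split_ifs at h
    simp only [Option.some.injEq] at h
    subst h
    simp at ht; simp [ht] at hL
  cases op with
  | clone2 =>
    simp only [applyOp, clone2_snoc, Option.some.injEq] at h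
    subst h
    simp at ht
  | push1 b =>
    simp only [applyOp, push1_snoc] at h
    split_ifs at h
    simp only [Option.some.injEq] at h
    subst h
    simp at ht; simp [ht] at hL
  | push2 b =>
    simp only [applyOp, push2_snoc] at h
    split_ifs at h
    simp only [Option.some.injEq] at h
    subst h
    simp at ht; simp [ht] at hL
  | pop2 => exact .inl rfl
  | pop1 => exact (hpop1 h).elim
  | collapse =>
    refine .inr ⟨rfl, x, by simp [top2], ?_⟩
    simp only [applyOp, collapse, top1_snoc] at h
    split at h
    · rename_i a k hlast
      split_ifs at h with hk
      simp only [Option.some.injEq] at h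
      subst h
      simp only [List.length_take, List.length_append, List.length_singleton] at ht
      obtain rfl : k = 1 := by omega
      have hmem : Sum.inr (a, 1) ∈ x := List.mem_of_getLast? hlast
      refine ⟨hx.resolve_right fun hn => hn a hmem, ?_⟩
      rintro rfl
      exact absurd (hz a 1 hmem) (by simp)
    · exact (hpop1 h).elim
    · simp at h

lemma retSeg_of_run (ρ : Run S) (w : Word A) (hk : ∀ i < ρ.len, 1 < (ρ.stk i).length)
    (hl : ρ.stk ρ.len = [w]) (d : ℕ) :
    ∀ (u : Word A) (i : ℕ), u.length = d → i < ρ.len → ρ.stk i = [w, u] → ZeroLinks u →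
      RetSeg ρ i ρ.len := by
  induction d using Nat.strong_induction_on with
  | _ d ih =>
  intro u i hd hi hu hz
  have hshell : RetShell ρ i ρ.len := by
    refine ⟨hi, le_rfl, by rw [hu, hl]; rfl, ?_⟩
    intro k _ hkl hsub
    have := hsub.length_le
    have h2 := hk k hkl
    rw [hl] at this
    simp at this
    omega
  by_cases hv : ∃ k, i < k ∧ k < ρ.len ∧ 1 < u.length ∧ ρ.stk k = [w, u.dropLast]
  · obtain ⟨k, hik, hkl, hul, hst⟩ := hv
    refine .sub hshell hik hkl.le ?_ (ih u.dropLast.length (by simp; omega) u.dropLast k rfl hkl hst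
      fun a j ha => hz a j (List.mem_of_mem_dropLast ha))
    have := pop1_snoc [w] u
    rw [if_pos hul] at this
    rw [hu, hst]; exact this
  · have hinv : ∀ m, i + m < ρ.len → Inv w u (ρ.stk (i + m)) := by
      intro m
      induction m with
      | zero => intro _; exact ⟨u, [], hu, List.prefix_refl u, by simp⟩
      | succ m ihm =>
        intro hm
        obtain ⟨σ, _, _, hop⟩ := ρ.ok (i + m) (by omega)
        rcases inv_step hz (ihm (by omega)) hop (hk (i + m + 1) hm) with h | ⟨h1, h2⟩
        · exact h
        · exact absurd ⟨i + m + 1, by omega, hm, h1, h2⟩ hv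
    have h1 := hinv (ρ.len - 1 - i) (by omega)
    have e : i + (ρ.len - 1 - i) = ρ.len - 1 := by omega
    rw [e] at h1
    obtain ⟨σ, _, _, hop⟩ := ρ.ok (ρ.len - 1) (by omega)
    have e2 : ρ.len - 1 + 1 = ρ.len := by omega
    rw [e2] at hop
    have hlen1 : (ρ.cfg ρ.len).2.length = 1 := by
      have : (ρ.cfg ρ.len).2 = [w] := hl
      simp [this]
    rcases last_step hz h1 hop hlen1 with h | ⟨h, w', h2, h3, h4⟩
    · exact .pop2 hshell h
    · exact .collapse hshell h ⟨u, w', by rw [hu]; rfl, h2, h3, h4⟩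

lemma retSeg_shell {ρ : Run S} {i j : ℕ} (h : RetSeg ρ i j) : RetShell ρ i j := by
  cases h <;> assumption

lemma exRet_eq (w : Word A) : ExRet S w = RelRet S (down0 w) := by
  ext ⟨q, q'⟩
  constructor
  · rintro ⟨ρ, h0, hl, hr⟩
    obtain ⟨hpos, _, _, hsub⟩ := retSeg_shell hr
    have hlast : ρ.stk ρ.len = [down0 w] := congrArg Prod.snd hl
    have hw : ∀ i, i < ρ.len → 1 < (ρ.stk i).length ∧ (ρ.stk i).head? = some (down0 w) := by
      intro i
      induction i with
      | zero =>
        intro _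
        have : ρ.stk 0 = [down0 w, down0 w] := congrArg Prod.snd h0
        simp [this]
      | succ i ih =>
        intro hi
        obtain ⟨h1, h2⟩ := ih (by omega)
        obtain ⟨σ, _, _, hop⟩ := ρ.ok i (by omega)
        rcases head_step h1 h2 hop with h | h
        · exact h
        · refine absurd ?_ (hsub (i + 1) (by omega) hi)
          have h' : ρ.stk (i + 1) = [down0 w] := h
          rw [h', hlast]
          exact Substack.refl _
    have := run_to_ret ρ 1 (fun i hi => (hw i hi).1) (by simp [hlast]) ρ.len 0 (by omega)
    rw [h0, hl] at this
    exact ⟨_, this⟩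
  · rintro ⟨n, hn⟩
    have hg : Nonempty Γ := by
      cases hn with
      | step _ hs _ =>
        obtain ⟨γ, _⟩ := hs
        exact ⟨γ⟩
    obtain ⟨g⟩ := hg
    obtain ⟨ρ, hlen, h0, h1, h2⟩ := ret_to_run g hn
    subst hlen
    have hst0 : ρ.stk 0 = [down0 w, down0 w] := congrArg Prod.snd h0
    have hstl : ρ.stk ρ.len = [down0 w] := congrArg Prod.snd h1
    have hpos : 0 < ρ.len := by
      rcases Nat.eq_zero_or_pos ρ.len with h | h
      · rw [h, hst0] at hstl; simp at hstl
      · exact h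
    exact ⟨ρ, h0, h1, retSeg_of_run ρ (down0 w) h2 hstl _ _ 0 rfl hpos hst0 (zeroLinks_down0 w)⟩

/-! ### Words occurring in stacks -/

def GoodWord (bot : A) (x : Word A) : Prop :=
  ∃ p, x = Sum.inl bot :: p ∧ ∀ a ∈ p, symOf a ≠ bot

lemma GoodWord.snoc {bot : A} {x : Word A} (h : GoodWord bot x) {a : Letter A}
    (ha : symOf a ≠ bot) : GoodWord bot (x ++ [a]) := by
  obtain ⟨p, rfl, hp⟩ := h
  refine ⟨p ++ [a], rfl, ?_⟩
  intro b hb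
  simp only [List.mem_append, List.mem_singleton] at hb
  rcases hb with hb | rfl
  · exact hp b hb
  · exact ha

lemma GoodWord.dropLast {bot : A} {x : Word A} (h : GoodWord bot x) (hx : 1 < x.length) :
    GoodWord bot x.dropLast := by
  obtain ⟨p, rfl, hp⟩ := h
  rcases p with _ | ⟨b, p⟩
  · simp at hx
  · exact ⟨(b :: p).dropLast, by simp, fun a ha => hp a (List.mem_of_mem_dropLast ha)⟩

lemma isStack_good {bot : A} {s : Stack2 A} (h : IsStack bot s) : ∀ x ∈ s, GoodWord bot x := by
  induction h with
  | base => intro x hx; simp only [bottom2, List.mem_singleton] at hx; exact ⟨[], hx, by simp⟩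
  | @step s t op hs h ih =>
    rcases nil_or_snoc s with rfl | ⟨L, x, rfl⟩
    · cases op <;> simp [applyOp, clone2, push1, push2, pop1, pop2, collapse, top1, top2] at h
    have hL : ∀ z ∈ L, GoodWord bot z := fun z hz => ih z (by simp [hz])
    have hx : GoodWord bot x := ih x (by simp)
    have key : ∀ x', GoodWord bot x' → ∀ z ∈ L ++ [x'], GoodWord bot z := by
      intro x' hx' z hz
      simp only [List.mem_append, List.mem_singleton] at hz
      rcases hz with hz | rfl
      · exact hL z hz
      · exact hx'
    have hpop1 : pop1 (L ++ [x]) = some t → ∀ z ∈ t, GoodWord bot z := by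
      intro h
      rw [pop1_snoc] at h
      split_ifs at h with hl
      simp only [Option.some.injEq] at h
      subst h
      exact key _ (hx.dropLast hl)
    cases op with
    | clone2 =>
      simp only [applyOp, clone2_snoc, Option.some.injEq] at h
      subst h
      intro z hz
      exact ih z (by simpa using hz)
    | push1 b =>
      simp only [applyOp, push1_snoc] at h
      split_ifs at h with hb
      simp only [Option.some.injEq] at h
      subst h
      exact key _ (hx.snoc hb)
    | push2 b =>
      simp only [applyOp, push2_snoc] at h
      split_ifs at h with hb
      simp only [Option.some.injEq] at h
      subst h
      exact key _ (hx.snoc hb)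
    | pop2 =>
      simp only [applyOp, pop2_snoc] at h
      split_ifs at h
      simp only [Option.some.injEq] at h
      subst h
      exact hL
    | pop1 => exact hpop1 h
    | collapse =>
      simp only [applyOp, collapse] at h
      split at h
      · split_ifs at h with hk
        simp only [Option.some.injEq] at h
        subst h
        intro z hz
        exact ih z (List.mem_of_mem_take hz)
      · exact hpop1 h
      · simp at h

/-- A word of a stack is either `⊥` or a nonempty word followed by a non-`⊥` letter. -/
lemma word_cases {bot : A} {w : Word A} (h : ∃ s, IsStack bot s ∧ top2 s = some w) :
    w = [Sum.inl bot] ∨ ∃ v a, v ≠ [] ∧ w = v ++ [a] ∧ symOf a ≠ bot := by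
  obtain ⟨s, hs, ht⟩ := h
  obtain ⟨p, rfl, hp⟩ := isStack_good hs w (List.mem_of_getLast? ht)
  rcases nil_or_snoc p with rfl | ⟨p, a, rfl⟩
  · exact .inl rfl
  · exact .inr ⟨Sum.inl bot :: p, a, by simp, by simp, hp a (by simp)⟩

lemma relRet_snoc_eq {v v' : Word A} {a a' : Letter A} (hv : v ≠ []) (hv' : v' ≠ [])
    (hsym : symOf a = symOf a') (hlvl : lvlOf a = lvlOf a')
    (h : ExRet S v = ExRet S v') : ExRet S (v ++ [a]) ⊆ ExRet S (v' ++ [a']) := by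
  simp only [exRet_eq] at h ⊢
  have hd : ∀ (x : Word A) b, down0 (x ++ [b]) = down0 x ++ down0 [b] := by
    intro x b; simp [down0]
  rw [hd, hd]
  have hne : ∀ x : Word A, x ≠ [] → down0 x ≠ [] := by intro x hx; simpa [down0] using hx
  rcases a with a | ⟨a, i⟩ <;> rcases a' with a' | ⟨a', i'⟩ <;>
    simp only [symOf, lvlOf] at hsym hlvl <;> try omega
  · subst hsym
    exact relRet_mono (hne v hv) (hne v' hv') (zeroLinks_down0 v) (zeroLinks_down0 v')
      (.one a) h.subset
  · subst hsym
    exact relRet_mono (hne v hv) (hne v' hv') (zeroLinks_down0 v) (zeroLinks_down0 v')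
      (.zero a) h.subset

end Sim

/-- `ExRet(s)` is determined by `ExRet(Pop₁(s))`, `Sym(s)` and
`Lvl(s)` (with the convention `ExRet(ε) = ∅`). -/
theorem exRet_determined
    {Q A Γ : Type} [DecidableEq A] (S : CPS Q A Γ) (w w' : Word A)
    (hw : ∃ s, IsStack S.bot s ∧ top2 s = some w)
    (hw' : ∃ s, IsStack S.bot s ∧ top2 s = some w')
    (hsl : ∃ a a', w.getLast? = some a ∧ w'.getLast? = some a' ∧
      symOf a = symOf a' ∧ lvlOf a = lvlOf a')
    (hret : ExRet S w.dropLast = ExRet S w'.dropLast) :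
    ExRet S w = ExRet S w' := by
  obtain ⟨a, a', ha, ha', hsym, hlvl⟩ := hsl
  rcases word_cases hw with rfl | ⟨v, b, hv, rfl, hb⟩ <;>
    rcases word_cases hw' with rfl | ⟨v', b', hv', rfl, hb'⟩
  · rfl
  · simp only [List.getLast?_singleton, List.getLast?_concat, Option.some.injEq] at ha ha'
    subst ha; subst ha'
    exact absurd hsym.symm hb'
  · simp only [List.getLast?_singleton, List.getLast?_concat, Option.some.injEq] at ha ha'
    subst ha; subst ha'
    exact absurd hsym hb
  · simp only [List.getLast?_concat, Option.some.injEq] at ha ha'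
    subst ha; subst ha'
    simp only [List.dropLast_concat] at hret
    exact Set.Subset.antisymm (relRet_snoc_eq hv hv' hsym hlvl hret)
      (relRet_snoc_eq hv' hv hsym.symm hlvl.symm hret.symm)

end CPG
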